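/- arXiv:2605.19691 — 2 statements merged into one kernel-verified Lean document; each statement's English description precedes it below -/
import Mathlib

section
/- Let K be a field and let B₁,…,B_k ∈ K^{m×n} be a linearly independent family of matrices generating a column-nondegenerate matrix rank-metric code C = span_K{B₁,…,B_k}, with associated column-system S. For every subspace U ⊆ K^k, let D_U := {Σᵢ uᵢBᵢ : u ∈ U} ⊆ C. Then dim_K S_c(U^⊥) = n − dim_K(Σ_{M∈D_U} rowsp(M)), where U^⊥ = {v ∈ K^k : Σᵢ uᵢvᵢ = 0 for all u ∈ U}. -/
/-!
Write `X_c = ∑ l, c l • X_l` for `c ∈ K^n`. The column-system is built so that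
`u ᵥ* X_c = (∑ i, u i • B i) *ᵥ c`, hence `colsp(X_c) ⊆ U^⊥` if and only if `c` is orthogonal to
every row of every matrix of `D_U`. Thus the preimage of `S_c(U^⊥)` under the surjection `c ↦ X_c`
onto `S` is the orthogonal complement of the row support of `D_U`, and the case `U = K^k`
identifies the kernel of that surjection as the orthogonal complement of the row support of
`C`; rank–nullity does the rest.
-/

open Matrix

section Defs

variable {K : Type*} [Field K]

/-- The row space of a matrix: the span of its rows in `K^b`. -/
noncomputable def rowSpace {a b : ℕ} (M : Matrix (Fin a) (Fin b) K) :
    Submodule K (Fin b → K) :=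
  Submodule.span K (Set.range fun i => M i)

/-- The column space of a matrix: the span of its columns in `K^a`. -/
noncomputable def colSpace {a b : ℕ} (M : Matrix (Fin a) (Fin b) K) :
    Submodule K (Fin a → K) :=
  Submodule.span K (Set.range fun j i => M i j)

/-- `Sc S U = {X ∈ S : colsp(X) ⊆ U}`, a subspace of the matrix space. -/
noncomputable def Sc {a b : ℕ} (S : Submodule K (Matrix (Fin a) (Fin b) K))
    (U : Submodule K (Fin a → K)) : Submodule K (Matrix (Fin a) (Fin b) K) where
  carrier := {X | X ∈ S ∧ colSpace X ≤ U}
  add_mem' := by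
    rintro X Y ⟨hXS, hXU⟩ ⟨hYS, hYU⟩
    refine ⟨S.add_mem hXS hYS, ?_⟩
    rw [colSpace, Submodule.span_le]
    rintro v ⟨j, rfl⟩
    have hx : (fun i => X i j) ∈ U := hXU (Submodule.subset_span ⟨j, rfl⟩)
    have hy : (fun i => Y i j) ∈ U := hYU (Submodule.subset_span ⟨j, rfl⟩)
    exact U.add_mem hx hy
  zero_mem' := by
    refine ⟨S.zero_mem, ?_⟩
    rw [colSpace, Submodule.span_le]
    rintro v ⟨j, rfl⟩
    exact U.zero_mem
  smul_mem' := by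
    rintro c X ⟨hXS, hXU⟩
    refine ⟨S.smul_mem c hXS, ?_⟩
    rw [colSpace, Submodule.span_le]
    rintro v ⟨j, rfl⟩
    exact U.smul_mem c (hXU (Submodule.subset_span ⟨j, rfl⟩))

/-- `Sr S U = {X ∈ S : rowsp(X) ⊆ U}`, a subspace of the matrix space. -/
noncomputable def Sr {a b : ℕ} (S : Submodule K (Matrix (Fin a) (Fin b) K))
    (U : Submodule K (Fin b → K)) : Submodule K (Matrix (Fin a) (Fin b) K) where
  carrier := {X | X ∈ S ∧ rowSpace X ≤ U}
  add_mem' := by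
    rintro X Y ⟨hXS, hXU⟩ ⟨hYS, hYU⟩
    refine ⟨S.add_mem hXS hYS, ?_⟩
    rw [rowSpace, Submodule.span_le]
    rintro v ⟨i, rfl⟩
    have hx : X i ∈ U := hXU (Submodule.subset_span ⟨i, rfl⟩)
    have hy : Y i ∈ U := hYU (Submodule.subset_span ⟨i, rfl⟩)
    exact U.add_mem hx hy
  zero_mem' := by
    refine ⟨S.zero_mem, ?_⟩
    rw [rowSpace, Submodule.span_le]
    rintro v ⟨i, rfl⟩
    exact U.zero_mem
  smul_mem' := by
    rintro c X ⟨hXS, hXU⟩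
    refine ⟨S.smul_mem c hXS, ?_⟩
    rw [rowSpace, Submodule.span_le]
    rintro v ⟨i, rfl⟩
    exact U.smul_mem c (hXU (Submodule.subset_span ⟨i, rfl⟩))

/-- Row support of a set of matrices: the sum of the row spaces of its elements. -/
noncomputable def rowSupport {a b : ℕ} (D : Submodule K (Matrix (Fin a) (Fin b) K)) :
    Submodule K (Fin b → K) :=
  ⨆ M ∈ D, rowSpace M

/-- Column support of a set of matrices: the sum of the column spaces of its elements. -/
noncomputable def colSupport {a b : ℕ} (D : Submodule K (Matrix (Fin a) (Fin b) K)) :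
    Submodule K (Fin a → K) :=
  ⨆ M ∈ D, colSpace M

/-- The hyperplane `u^⊥ = {v : ∑ i, u i * v i = 0}`. -/
noncomputable def perp {a : ℕ} (u : Fin a → K) : Submodule K (Fin a → K) where
  carrier := {v | ∑ i, u i * v i = 0}
  add_mem' := by
    intro v w hv hw
    simp only [Set.mem_setOf_eq, Pi.add_apply, mul_add, Finset.sum_add_distrib] at *
    simp [hv, hw]
  zero_mem' := by simp
  smul_mem' := by
    intro c v hv
    simp only [Set.mem_setOf_eq, Pi.smul_apply, smul_eq_mul] at *
    have : ∑ i, u i * (c * v i) = c * ∑ i, u i * v i := by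
      rw [Finset.mul_sum]; congr 1; ext i; ring
    simp [this, hv]

/-- The orthogonal complement `U^⊥ = {v : ∀ u ∈ U, ∑ i, u i * v i = 0}`. -/
noncomputable def perpSub {a : ℕ} (U : Submodule K (Fin a → K)) : Submodule K (Fin a → K) :=
  ⨅ u ∈ U, perp u

/-- The slices of the column-system: `(X l) i j = (B i) j l`. -/
def colSlices {m n k : ℕ} (B : Fin k → Matrix (Fin m) (Fin n) K) :
    Fin n → Matrix (Fin k) (Fin m) K :=
  fun l => Matrix.of fun i j => B i j l

/-- The slices of the row-system: `(Y j) l i = (B i) j l`. -/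
def rowSlices {m n k : ℕ} (B : Fin k → Matrix (Fin m) (Fin n) K) :
    Fin m → Matrix (Fin n) (Fin k) K :=
  fun j => Matrix.of fun l i => B i j l

/-- The linear map `u ↦ ∑ i, u i • B i` (i.e. `u ↦ m₁(T,u)`). -/
noncomputable def combMap {m n k : ℕ} (B : Fin k → Matrix (Fin m) (Fin n) K) :
    (Fin k → K) →ₗ[K] Matrix (Fin m) (Fin n) K where
  toFun u := ∑ i, u i • B i
  map_add' := by intro u v; simp [add_smul, Finset.sum_add_distrib]
  map_smul' := by intro c u; simp [smul_smul, Finset.smul_sum]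

/-- The `t`-th row-generalized rank weight. -/
noncomputable def dRow {a b : ℕ} (C : Submodule K (Matrix (Fin a) (Fin b) K)) (t : ℕ) : ℕ :=
  sInf {r | ∃ D : Submodule K (Matrix (Fin a) (Fin b) K),
    D ≤ C ∧ Module.finrank K D = t ∧ Module.finrank K (rowSupport D) = r}

/-- The `t`-th column-generalized rank weight. -/
noncomputable def dCol {a b : ℕ} (C : Submodule K (Matrix (Fin a) (Fin b) K)) (t : ℕ) : ℕ :=
  sInf {r | ∃ D : Submodule K (Matrix (Fin a) (Fin b) K),
    D ≤ C ∧ Module.finrank K D = t ∧ Module.finrank K (colSupport D) = r}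

end Defs

section Submodule

variable {K V W : Type*} [DivisionRing K] [AddCommGroup V] [Module K V] [FiniteDimensional K V]
  [AddCommGroup W] [Module K W]

theorem finrank_comap_of_le_range {f : V →ₗ[K] W} {Q : Submodule K W}
    (hQ : Q ≤ LinearMap.range f) :
    Module.finrank K (Q.comap f) = Module.finrank K Q + Module.finrank K (LinearMap.ker f) := by
  have hker : LinearMap.ker f ≤ Q.comap f := LinearMap.ker_le_comap f
  rw [← LinearMap.finrank_range_add_finrank_ker (f.domRestrict (Q.comap f)),
    LinearMap.range_domRestrict, Submodule.map_comap_eq_of_le hQ, LinearMap.ker_domRestrict]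
  exact congrArg _ (Submodule.submoduleOfEquivOfLe hker).finrank_eq

end Submodule

section Perp

variable {K : Type*} [Field K] {a b : ℕ}

theorem mem_perp {u v : Fin a → K} : v ∈ perp u ↔ u ⬝ᵥ v = 0 :=
  Iff.rfl

theorem mem_perpSub {U : Submodule K (Fin a → K)} {v : Fin a → K} :
    v ∈ perpSub U ↔ ∀ u ∈ U, u ⬝ᵥ v = 0 := by
  simp only [perpSub, Submodule.mem_iInf, mem_perp]

theorem mem_perpSub_iff_le_perp {U : Submodule K (Fin a → K)} {v : Fin a → K} :
    v ∈ perpSub U ↔ U ≤ perp v := by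
  simp only [mem_perpSub, SetLike.le_def, mem_perp, dotProduct_comm v]

theorem perpSub_eq_comap_dualAnnihilator (U : Submodule K (Fin a → K)) :
    perpSub U = U.dualAnnihilator.comap (dotProductEquiv K (Fin a)).toLinearMap := by
  ext v
  simp [mem_perpSub, Submodule.mem_dualAnnihilator, dotProduct_comm v]

theorem finrank_add_finrank_perpSub (U : Submodule K (Fin a → K)) :
    Module.finrank K U + Module.finrank K (perpSub U) = a := by
  rw [perpSub_eq_comap_dualAnnihilator,
    ((dotProductEquiv K (Fin a)).ofSubmodule' U.dualAnnihilator).finrank_eq,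
    Subspace.finrank_add_finrank_dualAnnihilator_eq, Module.finrank_fin_fun]

theorem rowSpace_le_perp {M : Matrix (Fin a) (Fin b) K} {c : Fin b → K} :
    rowSpace M ≤ perp c ↔ M *ᵥ c = 0 := by
  simp only [rowSpace, Submodule.span_le, Set.range_subset_iff, SetLike.mem_coe, mem_perp,
    funext_iff, mulVec, dotProduct_comm c, Pi.zero_apply]

theorem mem_perpSub_rowSupport {D : Submodule K (Matrix (Fin a) (Fin b) K)} {c : Fin b → K} :
    c ∈ perpSub (rowSupport D) ↔ ∀ M ∈ D, M *ᵥ c = 0 := by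
  simp only [mem_perpSub_iff_le_perp, rowSupport, iSup_le_iff, rowSpace_le_perp]

theorem colSpace_le_perpSub {X : Matrix (Fin a) (Fin b) K} {U : Submodule K (Fin a → K)} :
    colSpace X ≤ perpSub U ↔ ∀ u ∈ U, u ᵥ* X = 0 := by
  simp only [colSpace, Submodule.span_le, Set.range_subset_iff, SetLike.mem_coe, mem_perpSub,
    funext_iff]
  exact ⟨fun h u hu j => h j u hu, fun h j u hu => h u hu j⟩

theorem colSpace_le_perpSub_top {X : Matrix (Fin a) (Fin b) K} :
    colSpace X ≤ perpSub ⊤ ↔ X = 0 := by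
  simp only [colSpace_le_perpSub, ext_iff_vecMul, Submodule.mem_top, true_imp_iff, vecMul_zero]

theorem mem_Sc {S : Submodule K (Matrix (Fin a) (Fin b) K)} {U : Submodule K (Fin a → K)}
    {X : Matrix (Fin a) (Fin b) K} : X ∈ Sc S U ↔ X ∈ S ∧ colSpace X ≤ U :=
  Iff.rfl

end Perp

section ColumnSystem

variable {K : Type*} [Field K] {m n k : ℕ} (B : Fin k → Matrix (Fin m) (Fin n) K)

theorem range_combMap : LinearMap.range (combMap B) = Submodule.span K (Set.range B) :=
  Fintype.range_linearCombination K B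

theorem vecMul_colSlices (u : Fin k → K) (l : Fin n) :
    u ᵥ* colSlices B l = (combMap B u).col l := by
  ext j
  simp [combMap, colSlices, vecMul, dotProduct, Matrix.sum_apply]

theorem vecMul_linearCombination_colSlices (c : Fin n → K) (u : Fin k → K) :
    u ᵥ* Fintype.linearCombination K (colSlices B) c = combMap B u *ᵥ c := by
  simp only [Fintype.linearCombination_apply, vecMul_sum, vecMul_smul, vecMul_colSlices,
    mulVec_eq_sum, op_smul_eq_smul, col_def]

theorem colSpace_linearCombination_colSlices_le_perpSub {c : Fin n → K}
    {U : Submodule K (Fin k → K)} :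
    colSpace (Fintype.linearCombination K (colSlices B) c) ≤ perpSub U ↔
      c ∈ perpSub (rowSupport (U.map (combMap B))) := by
  simp only [colSpace_le_perpSub, vecMul_linearCombination_colSlices, mem_perpSub_rowSupport,
    Submodule.mem_map, forall_exists_index, and_imp, forall_apply_eq_imp_iff₂]

theorem ker_linearCombination_colSlices :
    LinearMap.ker (Fintype.linearCombination K (colSlices B)) =
      perpSub (rowSupport (Submodule.span K (Set.range B))) := by
  ext c
  rw [LinearMap.mem_ker, ← colSpace_le_perpSub_top,
    colSpace_linearCombination_colSlices_le_perpSub, Submodule.map_top, range_combMap]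

theorem comap_Sc_span_colSlices (U : Submodule K (Fin k → K)) :
    (Sc (Submodule.span K (Set.range (colSlices B))) (perpSub U)).comap
        (Fintype.linearCombination K (colSlices B)) =
      perpSub (rowSupport (U.map (combMap B))) := by
  ext c
  rw [Submodule.mem_comap, mem_Sc, colSpace_linearCombination_colSlices_le_perpSub,
    ← Fintype.range_linearCombination]
  exact and_iff_right (LinearMap.mem_range_self _ c)

end ColumnSystem

theorem stmt1_general {K : Type*} [Field K] {m n k : ℕ}
    (B : Fin k → Matrix (Fin m) (Fin n) K) (U : Submodule K (Fin k → K)) :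
    Module.finrank K (Sc (Submodule.span K (Set.range (colSlices B))) (perpSub U))
        + Module.finrank K (rowSupport (Submodule.map (combMap B) U))
      = Module.finrank K (rowSupport (Submodule.span K (Set.range B))) := by
  have hrange : Sc (Submodule.span K (Set.range (colSlices B))) (perpSub U) ≤
      LinearMap.range (Fintype.linearCombination K (colSlices B)) :=
    fun _ hX => (Fintype.range_linearCombination K (colSlices B)).ge (mem_Sc.1 hX).1
  have hdim := finrank_comap_of_le_range hrange
  rw [comap_Sc_span_colSlices, ker_linearCombination_colSlices] at hdim
  have hDU := finrank_add_finrank_perpSub (rowSupport (U.map (combMap B)))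
  have hC := finrank_add_finrank_perpSub (rowSupport (Submodule.span K (Set.range B)))
  lia

/-- For a column-nondegenerate code `C = span{B₁,…,B_k}` with associated
column-system `S`, and any subspace `U ⊆ K^k`, with `D_U = {∑ i, uᵢ Bᵢ : u ∈ U}`,
one has `dim S_c(U^⊥) = n − dim (Σ_{M ∈ D_U} rowsp(M))`. -/
theorem stmt1 {K : Type*} [Field K] {m n k : ℕ}
    (hm : 0 < m) (hn : 0 < n) (hk : 0 < k)
    (B : Fin k → Matrix (Fin m) (Fin n) K) (hB : LinearIndependent K B)
    (C : Submodule K (Matrix (Fin m) (Fin n) K))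
    (hC : C = Submodule.span K (Set.range B))
    (hnd : rowSupport C = ⊤)
    (S : Submodule K (Matrix (Fin k) (Fin m) K))
    (hS : S = Submodule.span K (Set.range (colSlices B)))
    (U : Submodule K (Fin k → K)) :
    Module.finrank K (Sc S (perpSub U))
      = n - Module.finrank K (rowSupport (Submodule.map (combMap B) U)) := by
  subst hC hS
  exact Nat.eq_sub_of_add_eq (by rw [stmt1_general, hnd, finrank_top, Module.finrank_fin_fun])
end

section
/- Let F be a finite field with q elements and let B₁,…,B_k ∈ F^{m×n} be a linearly independent family of matrices generating a column-nondegenerate matrix rank-metric code C = span_F{B₁,…,B_k}, with associated column-system S. Then every nonzero X ∈ S has rank(X) = m (i.e., C is column-faithful) if and only if, as integers, q^m · Σ_{M ∈ C, M ≠ 0} q^{n−rank(M)} = (q^k − q^m)(q^n − 1) + q^m(q^k − 1). -/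
open Matrix

/-!
The pairs `(u, v)` with `(∑ i, u i • B i) *ᵥ v = 0` are the pairs with
`u ᵥ* (∑ l, v l • X l) = 0`, where `X` are the slices of the column-system. Counting them by `u` and
by `v`, with rank-nullity on each side, gives
`∑ M ∈ C, q ^ (n - rank M) = ∑ X ∈ S, q ^ (k - rank X)`. Every `X ∈ S` satisfies
`q ^ k ≤ q ^ m * q ^ (k - rank X)`, with equality exactly when `rank X = m`; summing over the
`q ^ n - 1` nonzero elements of `S`, faithfulness is equality in the summed bound.
-/

open scoped Finset

theorem add_finsum_mem_sdiff_singleton {α M : Type*} [AddCommMonoid M] {s : Set α} {a : α}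
    (ha : a ∈ s) (hs : s.Finite) (f : α → M) :
    f a + ∑ᶠ i ∈ s \ {a}, f i = ∑ᶠ i ∈ s, f i := by
  rw [← finsum_mem_insert f (by simp) hs.sdiff, Set.insert_sdiff_self_of_mem ha]

section LinearIndependent

variable {R V ι : Type*} [Semiring R] [AddCommMonoid V] [Module R V] [Fintype ι] {b : ι → V}

theorem finsum_mem_span_range {A : Type*} [AddCommMonoid A] (hb : LinearIndependent R b)
    (f : V → A) :
    ∑ᶠ x ∈ Submodule.span R (Set.range b), f x
      = ∑ᶠ u : ι → R, f (Fintype.linearCombination R b u) := by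
  rw [← Fintype.range_linearCombination,
    ← finsum_mem_range hb.fintypeLinearCombination_injective]
  rfl

theorem ncard_span_range [Fintype R] (hb : LinearIndependent R b) :
    (Submodule.span R (Set.range b) : Set V).ncard = Fintype.card R ^ Fintype.card ι := by
  classical
  rw [← Fintype.range_linearCombination, LinearMap.coe_range, ← Nat.card_coe_set_eq,
    Nat.card_range_of_injective hb.fintypeLinearCombination_injective, Nat.card_eq_fintype_card,
    Fintype.card_fun]

end LinearIndependent

section RankCount

variable {R ι κ : Type*} [CommSemiring R] [StrongRankCondition R] [Fintype ι] [Fintype κ]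
  {A : Type*} [CommSemiring A] [LinearOrder A] [IsStrictOrderedRing A] {q : A}

theorem pow_card_height_le_mul_pow_sub_rank (hq : 1 ≤ q) (X : Matrix ι κ R) :
    q ^ Fintype.card ι ≤ q ^ Fintype.card κ * q ^ (Fintype.card ι - X.rank) := by
  have hwidth := X.rank_le_card_width
  rw [← pow_add]
  exact pow_le_pow_right₀ hq (by omega)

theorem pow_card_height_eq_mul_pow_sub_rank_iff (hq : 1 < q) (X : Matrix ι κ R) :
    q ^ Fintype.card ι = q ^ Fintype.card κ * q ^ (Fintype.card ι - X.rank) ↔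
      X.rank = Fintype.card κ := by
  have hheight := X.rank_le_card_height
  rw [← pow_add, (pow_right_injective₀ (zero_lt_one.trans hq) hq.ne').eq_iff]
  omega

theorem forall_rank_eq_card_width_iff_finsum (hq : 1 < q) {T : Set (Matrix ι κ R)}
    (hT : T.Finite) :
    (∀ X ∈ T, X.rank = Fintype.card κ) ↔
      q ^ Fintype.card κ * ∑ᶠ X ∈ T, q ^ (Fintype.card ι - X.rank)
        = T.ncard * q ^ Fintype.card ι := by
  rw [finsum_mem_eq_finite_toFinset_sum _ hT, Set.ncard_eq_toFinset_card _ hT, Finset.mul_sum,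
    ← nsmul_eq_mul, ← Finset.sum_const, eq_comm,
    Finset.sum_eq_sum_iff_of_le fun X _ => pow_card_height_le_mul_pow_sub_rank hq.le X]
  simp only [pow_card_height_eq_mul_pow_sub_rank_iff hq, hT.mem_toFinset]

theorem forall_mem_span_rank_eq_card_width_iff_finsum {τ : Type*} [Fintype τ] [Fintype R]
    {X : τ → Matrix ι κ R} (hX : LinearIndependent R X) :
    (∀ Y ∈ Submodule.span R (Set.range X), Y ≠ 0 → Y.rank = Fintype.card κ) ↔
      (Fintype.card R : ℤ) ^ Fintype.card κ
          * ∑ᶠ Y ∈ (Submodule.span R (Set.range X) : Set (Matrix ι κ R)) \ {0},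
              (Fintype.card R : ℤ) ^ (Fintype.card ι - Y.rank)
        = ((Fintype.card R : ℤ) ^ Fintype.card τ - 1)
            * (Fintype.card R : ℤ) ^ Fintype.card ι := by
  have := nontrivial_of_invariantBasisNumber R
  have hq : 1 < (Fintype.card R : ℤ) := mod_cast Fintype.one_lt_card
  have hcard : (((Submodule.span R (Set.range X) : Set (Matrix ι κ R)) \ {0}).ncard : ℤ)
      = (Fintype.card R : ℤ) ^ Fintype.card τ - 1 := by
    rw [Set.ncard_sdiff_singleton_of_mem (Submodule.zero_mem _), ncard_span_range hX,
      Nat.cast_pred (pow_pos Fintype.card_pos _), Nat.cast_pow]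
  rw [← hcard, ← forall_rank_eq_card_width_iff_finsum hq (Set.toFinite _)]
  simp only [Set.mem_sdiff, SetLike.mem_coe, Set.mem_singleton_iff, and_imp]

end RankCount

section KernelCount

variable {K ι κ : Type*} [Field K] [Fintype K] [DecidableEq K] [Fintype ι] [Fintype κ]

theorem card_filter_mulVec_eq_zero [DecidableEq κ] (M : Matrix ι κ K) :
    #{v : κ → K | M *ᵥ v = 0} = Fintype.card K ^ (Fintype.card κ - M.rank) := by
  have hnullity := M.mulVecLin.finrank_range_add_finrank_ker
  rw [Module.finrank_fintype_fun_eq_card] at hnullity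
  calc #{v : κ → K | M *ᵥ v = 0}
      = Nat.card (LinearMap.ker M.mulVecLin) := by
        simp [Nat.card_eq_fintype_card, Fintype.card_subtype]
    _ = Fintype.card K ^ (Fintype.card κ - M.rank) := by
        rw [Module.natCard_eq_pow_finrank (K := K), Nat.card_eq_fintype_card, Matrix.rank,
          ← hnullity, Nat.add_sub_cancel_left]

theorem card_filter_vecMul_eq_zero [DecidableEq ι] (M : Matrix ι κ K) :
    #{u : ι → K | u ᵥ* M = 0} = Fintype.card K ^ (Fintype.card ι - M.rank) := by
  simp only [← M.rank_transpose, ← card_filter_mulVec_eq_zero, mulVec_transpose]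

end KernelCount

section ColumnSystem

variable {K : Type*} [Field K] {m n k : ℕ}

theorem combMap_eq_linearCombination (B : Fin k → Matrix (Fin m) (Fin n) K) :
    combMap B = Fintype.linearCombination K B :=
  rfl

theorem combMap_mulVec (B : Fin k → Matrix (Fin m) (Fin n) K) (u : Fin k → K) (v : Fin n → K) :
    combMap B u *ᵥ v = u ᵥ* combMap (colSlices B) v := by
  ext j
  simp only [combMap, colSlices, LinearMap.coe_mk, AddHom.coe_mk, mulVec, vecMul, dotProduct,
    Matrix.sum_apply, Matrix.smul_apply, of_apply, smul_eq_mul, Finset.sum_mul, Finset.mul_sum]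
  rw [Finset.sum_comm]
  exact Finset.sum_congr rfl fun i _ => Finset.sum_congr rfl fun l _ => by ring

theorem rowSpace_le_perp_iff {M : Matrix (Fin m) (Fin n) K} {v : Fin n → K} :
    rowSpace M ≤ perp v ↔ M *ᵥ v = 0 := by
  rw [rowSpace, Submodule.span_le, Set.range_subset_iff, funext_iff]
  exact forall_congr' fun i => by rw [mulVec, dotProduct_comm]; rfl

theorem rowSupport_le_perp_iff {D : Submodule K (Matrix (Fin m) (Fin n) K)} {v : Fin n → K} :
    rowSupport D ≤ perp v ↔ ∀ M ∈ D, M *ᵥ v = 0 := by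
  simp only [rowSupport, iSup₂_le_iff, rowSpace_le_perp_iff]

theorem perp_eq_top_iff {v : Fin n → K} : perp v = ⊤ ↔ v = 0 := by
  rw [← dotProduct_eq_zero_iff, Submodule.eq_top_iff']
  rfl

theorem linearIndependent_colSlices {B : Fin k → Matrix (Fin m) (Fin n) K}
    (hB : rowSupport (Submodule.span K (Set.range B)) = ⊤) :
    LinearIndependent K (colSlices B) := by
  rw [linearIndependent_iff_injective_fintypeLinearCombination, ← combMap_eq_linearCombination,
    injective_iff_map_eq_zero]
  intro v hv
  rw [← perp_eq_top_iff, ← top_le_iff, ← hB, rowSupport_le_perp_iff,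
    ← Fintype.range_linearCombination, ← combMap_eq_linearCombination]
  rintro _ ⟨u, rfl⟩
  rw [combMap_mulVec, hv, vecMul_zero]

variable [Fintype K]

theorem sum_pow_sub_rank_combMap (B : Fin k → Matrix (Fin m) (Fin n) K) :
    ∑ u : Fin k → K, Fintype.card K ^ (n - (combMap B u).rank)
      = ∑ v : Fin n → K, Fintype.card K ^ (k - (combMap (colSlices B) v).rank) := by
  classical
  calc ∑ u : Fin k → K, Fintype.card K ^ (n - (combMap B u).rank)
      = ∑ u : Fin k → K, #{v : Fin n → K | combMap B u *ᵥ v = 0} := by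
        simp only [card_filter_mulVec_eq_zero, Fintype.card_fin]
    _ = ∑ v : Fin n → K, #{u : Fin k → K | combMap B u *ᵥ v = 0} :=
        Finset.sum_card_bipartiteAbove_eq_sum_card_bipartiteBelow _
    _ = ∑ v : Fin n → K, Fintype.card K ^ (k - (combMap (colSlices B) v).rank) := by
        simp only [combMap_mulVec, card_filter_vecMul_eq_zero, Fintype.card_fin]

theorem finsum_pow_sub_rank_span_colSlices (A : Type*) [CommSemiring A]
    {B : Fin k → Matrix (Fin m) (Fin n) K} (hB : LinearIndependent K B)
    (hX : LinearIndependent K (colSlices B)) :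
    ∑ᶠ M ∈ Submodule.span K (Set.range B), (Fintype.card K : A) ^ (n - M.rank)
      = ∑ᶠ X ∈ Submodule.span K (Set.range (colSlices B)),
          (Fintype.card K : A) ^ (k - X.rank) := by
  rw [finsum_mem_span_range hB, finsum_mem_span_range hX, finsum_eq_sum_of_fintype,
    finsum_eq_sum_of_fintype]
  exact_mod_cast congrArg (Nat.cast : ℕ → A) (sum_pow_sub_rank_combMap B)

theorem finsum_pow_sub_rank_sdiff_zero_span_colSlices (A : Type*) [CommSemiring A]
    {B : Fin k → Matrix (Fin m) (Fin n) K} (hB : LinearIndependent K B)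
    (hX : LinearIndependent K (colSlices B)) :
    (Fintype.card K : A) ^ n
        + ∑ᶠ M ∈ (Submodule.span K (Set.range B) : Set (Matrix (Fin m) (Fin n) K)) \ {0},
            (Fintype.card K : A) ^ (n - M.rank)
      = (Fintype.card K : A) ^ k
        + ∑ᶠ X ∈ (Submodule.span K (Set.range (colSlices B)) :
            Set (Matrix (Fin k) (Fin m) K)) \ {0}, (Fintype.card K : A) ^ (k - X.rank) := by
  have hCzero := add_finsum_mem_sdiff_singleton
    (Submodule.zero_mem (Submodule.span K (Set.range B))) (Set.toFinite _)
    fun M => (Fintype.card K : A) ^ (n - M.rank)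
  have hSzero := add_finsum_mem_sdiff_singleton
    (Submodule.zero_mem (Submodule.span K (Set.range (colSlices B)))) (Set.toFinite _)
    fun X => (Fintype.card K : A) ^ (k - X.rank)
  simp only [rank_zero, Nat.sub_zero] at hCzero hSzero
  rw [hCzero, hSzero]
  exact finsum_pow_sub_rank_span_colSlices A hB hX

end ColumnSystem

/-- A column-nondegenerate code `C` with associated column-system `S` is
column-faithful (every nonzero `X ∈ S` has rank `m`) iff
`q^m · Σ_{M ∈ C, M≠0} q^{n−rk(M)} = (q^k − q^m)(q^n − 1) + q^m(q^k − 1)`. -/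
theorem stmt10 {F : Type*} [Field F] [Fintype F] {m n k : ℕ}
    (hm : 0 < m) (hn : 0 < n) (hk : 0 < k)
    (q : ℕ) (hq : q = Fintype.card F)
    (B : Fin k → Matrix (Fin m) (Fin n) F) (hB : LinearIndependent F B)
    (C : Submodule F (Matrix (Fin m) (Fin n) F))
    (hC : C = Submodule.span F (Set.range B))
    (hnd : rowSupport C = ⊤)
    (S : Submodule F (Matrix (Fin k) (Fin m) F))
    (hS : S = Submodule.span F (Set.range (colSlices B))) :
    (∀ X ∈ S, X ≠ 0 → X.rank = m) ↔
      (q : ℤ) ^ m * ∑ᶠ M ∈ (C : Set (Matrix (Fin m) (Fin n) F)) \ {0},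
          (q : ℤ) ^ (n - M.rank)
        = ((q : ℤ) ^ k - (q : ℤ) ^ m) * ((q : ℤ) ^ n - 1)
            + (q : ℤ) ^ m * ((q : ℤ) ^ k - 1) := by
  subst hC hS hq
  have hX : LinearIndependent F (colSlices B) := linearIndependent_colSlices hnd
  have hfaithful := forall_mem_span_rank_eq_card_width_iff_finsum hX
  simp only [Fintype.card_fin] at hfaithful
  have hdual := finsum_pow_sub_rank_sdiff_zero_span_colSlices ℤ hB hX
  rw [hfaithful, eq_sub_iff_add_eq'.2 hdual]
  constructor <;> intro h <;> linear_combination h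
end
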